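/- Let x⃗ = a_1 x⃗_1 + ⋯ + a_n x⃗_n + a c⃗ be an element of 𝕃 written in normal form, i.e. with 0 ≤ a_i < p_i for all i and a ∈ ℤ. Then x⃗ belongs to 𝕃_+ if and only if a ≥ 0. -/

import Mathlib

/-- The subgroup of relations `p i • x⃗_i − c⃗` inside the free abelian group
`(Fin n → ℤ) × ℤ` on the generators `x⃗_1, …, x⃗_n, c⃗`. -/
def GLrels (n : ℕ) (p : Fin n → ℕ) : AddSubgroup ((Fin n → ℤ) × ℤ) :=
  AddSubgroup.closure (Set.range fun i : Fin n => ((Pi.single i (p i : ℤ), -1) : (Fin n → ℤ) × ℤ))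

/-- The grading group `𝕃 = ⟨x⃗_1, …, x⃗_n, c⃗⟩ / ⟨p_i x⃗_i − c⃗⟩`. -/
abbrev GLgroup (n : ℕ) (p : Fin n → ℕ) : Type :=
  ((Fin n → ℤ) × ℤ) ⧸ GLrels n p

/-- The generator `x⃗_i` of `𝕃`. -/
def GLx (n : ℕ) (p : Fin n → ℕ) (i : Fin n) : GLgroup n p :=
  QuotientAddGroup.mk (Pi.single i 1, 0)

/-- The generator `c⃗` of `𝕃`. -/
def GLc (n : ℕ) (p : Fin n → ℕ) : GLgroup n p :=
  QuotientAddGroup.mk (0, 1)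

/-- The positive cone `𝕃_+`: the submonoid of `𝕃` generated by `x⃗_1, …, x⃗_n` and `c⃗`. -/
def GLplus (n : ℕ) (p : Fin n → ℕ) : AddSubmonoid (GLgroup n p) :=
  AddSubmonoid.closure ({GLc n p} ∪ Set.range (GLx n p))

/-! Subtracting `⌊a i / p i⌋` times the relation `p i • x⃗_i = c⃗` for each `i` brings
`∑ i, a i • x⃗_i + b • c⃗` into normal form, with `c⃗`-coefficient `b + ∑ i, ⌊a i / p i⌋`. This
normal form has natural coefficients as soon as its `c⃗`-coefficient is nonnegative. Conversely,
any expression of the same element with natural coefficients arises by some multiples `k i` of the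
relations, and nonnegativity of its `x⃗_i`-coefficient `a i + k i * p i` says `-k i ≤ ⌊a i / p i⌋`;
so the normal form has the largest `c⃗`-coefficient among all of them. -/

section

variable {n : ℕ} {p : Fin n → ℕ}

theorem mem_GLrels_iff {r : (Fin n → ℤ) × ℤ} :
    r ∈ GLrels n p ↔ ∃ k : Fin n → ℤ, r = (fun i => k i * p i, -∑ i, k i) := by
  have sum_relations (k : Fin n → ℤ) :
      ∑ i, k i • ((Pi.single i (p i : ℤ), -1) : (Fin n → ℤ) × ℤ) =
        (fun i => k i * p i, -∑ i, k i) := by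
    ext j
    · simp [Prod.fst_sum, Finset.sum_apply, Pi.single_apply]
    · simp [Prod.snd_sum]
  simp only [GLrels, AddSubgroup.mem_closure_range_iff_of_fintype, sum_relations]

theorem sum_zsmul_GLx_add_zsmul_GLc (a : Fin n → ℤ) (b : ℤ) :
    ∑ i, a i • GLx n p i + b • GLc n p = QuotientAddGroup.mk (a, b) := by
  have sum_generators :
      ∑ i, a i • ((Pi.single i 1, 0) : (Fin n → ℤ) × ℤ) + b • (0, 1) = (a, b) := by
    ext j
    · simp [Prod.fst_sum, Finset.sum_apply, Pi.single_apply]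
    · simp [Prod.snd_sum]
  rw [← sum_generators, QuotientAddGroup.mk_add, QuotientAddGroup.mk_sum]
  rfl

theorem sum_zsmul_GLx_add_zsmul_GLc_eq_iff {a a' : Fin n → ℤ} {b b' : ℤ} :
    ∑ i, a i • GLx n p i + b • GLc n p = ∑ i, a' i • GLx n p i + b' • GLc n p ↔
      ∃ k : Fin n → ℤ, (∀ i, a' i = a i + k i * p i) ∧ b' = b - ∑ i, k i := by
  simp only [sum_zsmul_GLx_add_zsmul_GLc, QuotientAddGroup.eq, mem_GLrels_iff, Prod.ext_iff,
    funext_iff, Prod.fst_add, Prod.snd_add, Pi.add_apply, neg_add_eq_iff_eq_add, sub_eq_add_neg]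

theorem mem_GLplus_iff {x : GLgroup n p} :
    x ∈ GLplus n p ↔
      ∃ (u : Fin n → ℕ) (m : ℕ), x = ∑ i, u i • GLx n p i + m • GLc n p := by
  rw [GLplus, Set.union_comm, AddSubmonoid.closure_union, AddSubmonoid.mem_sup]
  simp only [AddSubmonoid.mem_closure_range_iff_of_fintype, AddSubmonoid.mem_closure_singleton]
  exact ⟨fun ⟨_, ⟨u, rfl⟩, _, ⟨m, rfl⟩, h⟩ => ⟨u, m, h.symm⟩,
    fun ⟨u, m, h⟩ => ⟨_, ⟨u, rfl⟩, _, ⟨m, rfl⟩, h.symm⟩⟩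

theorem normal_form_nonneg_iff_general (hp : ∀ i, 0 < p i) (a : Fin n → ℤ) (b : ℤ) :
    ∑ i, a i • GLx n p i + b • GLc n p ∈ GLplus n p ↔ 0 ≤ b + ∑ i, a i / p i := by
  simp only [mem_GLplus_iff, ← natCast_zsmul, sum_zsmul_GLx_add_zsmul_GLc_eq_iff]
  constructor
  · rintro ⟨u, m, k, hu, hm⟩
    have neg_le_ediv (i : Fin n) : -k i ≤ a i / p i := by
      rw [Int.le_ediv_iff_mul_le (by exact_mod_cast hp i)]
      linarith [hu i, Int.natCast_nonneg (u i)]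
    calc
      (0 : ℤ) ≤ m := Int.natCast_nonneg m
      _ = b + ∑ i, -k i := by rw [hm, Finset.sum_neg_distrib, sub_eq_add_neg]
      _ ≤ b + ∑ i, a i / p i := by gcongr with i; exact neg_le_ediv i
  · intro hb
    have emod_nonneg (i : Fin n) : 0 ≤ a i % p i :=
      Int.emod_nonneg _ (by exact_mod_cast (hp i).ne')
    refine ⟨fun i => (a i % p i).toNat, (b + ∑ i, a i / p i).toNat, fun i => -(a i / p i),
      fun i => ?_, ?_⟩
    · rw [Int.toNat_of_nonneg (emod_nonneg i), Int.emod_def]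
      ring
    · rw [Int.toNat_of_nonneg hb, Finset.sum_neg_distrib, sub_neg_eq_add]

end

/-- If `x⃗ = Σ a_i x⃗_i + a c⃗` is in normal form (`0 ≤ a_i < p_i`), then
`x⃗ ∈ 𝕃_+` if and only if `a ≥ 0`. -/
theorem normal_form_nonneg_iff (d n : ℕ) (hd : 1 ≤ d) (p : Fin n → ℕ) (hp : ∀ i, 0 < p i)
    (a : Fin n → ℤ) (ha : ∀ i, 0 ≤ a i ∧ a i < (p i : ℤ)) (b : ℤ)
    (x : GLgroup n p) (hx : x = (∑ i, a i • GLx n p i) + b • GLc n p) :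
    x ∈ GLplus n p ↔ 0 ≤ b := by
  have ediv_eq_zero (i : Fin n) : a i / p i = 0 := Int.ediv_eq_zero_of_lt (ha i).1 (ha i).2
  simp only [hx, normal_form_nonneg_iff_general hp, ediv_eq_zero, Finset.sum_const_zero, add_zero]
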